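/- arXiv:2401.14771 — 2 statements merged into one kernel-verified Lean document; each statement's English description precedes it below -/
import Mathlib

section
/- Let α ∈ (1,2), T > 0, L > 0, and let f : [0,T] × ℝ → ℝ be continuous with |f(t,x) − f(t,y)| ≤ L|x − y| for all t and x, y. Let y₁, y₂ : [0,T] → ℝ be continuous and satisfy yₖ(t) = y_{k,0} + y_{k,1} t + (1/Γ(α)) ∫₀ᵗ (t−s)^{α−1} f(s, yₖ(s)) ds for k = 1, 2, where y_{1,0} = y_{2,0} and y_{1,1} < y_{2,1}. Suppose T* ∈ (0,T] is such that E_{α,α}(−L t^α) > 0 and E_{α,2}(−L t^α) > 0 for all t ∈ [0,T*]. Then y₁(t) < y₂(t) for all t ∈ (0,T*]. -/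
/-- The two-parameter Mittag-Leffler function `E_{α,β}(z) = ∑ₖ zᵏ / Γ(αk + β)`. -/
noncomputable def mlE (α β z : ℝ) : ℝ := ∑' k : ℕ, z ^ k / Real.Gamma (α * k + β)

section
open MeasureTheory Set

theorem aux_beta {β γ a : ℝ} (hβ : 0 < β) (hγ : 0 < γ) (ha : 0 < a) :
    ∫ x in (0:ℝ)..a, x ^ (γ - 1) * (a - x) ^ (β - 1)
      = a ^ (β + γ - 1) * (Real.Gamma β * Real.Gamma γ / Real.Gamma (β + γ)) := by
  have h1 := Complex.betaIntegral_scaled (γ : ℂ) (β : ℂ) ha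
  have h2 := Complex.Gamma_mul_Gamma_eq_betaIntegral (s := (γ : ℂ)) (t := (β : ℂ))
    (by simpa using hγ) (by simpa using hβ)
  have hG : Complex.Gamma ((γ : ℂ) + β) ≠ 0 := by
    apply Complex.Gamma_ne_zero_of_re_pos; simp; linarith
  have h3 : Complex.betaIntegral (γ : ℂ) (β : ℂ)
      = ((Real.Gamma β * Real.Gamma γ / Real.Gamma (β + γ) : ℝ) : ℂ) := by
    have : Complex.betaIntegral (γ : ℂ) (β : ℂ)
      = Complex.Gamma γ * Complex.Gamma β / Complex.Gamma ((γ : ℂ) + β) := by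
      rw [h2]; field_simp
    rw [this, ← Complex.ofReal_add, Complex.Gamma_ofReal, Complex.Gamma_ofReal,
      Complex.Gamma_ofReal, add_comm γ β]
    push_cast; ring
  rw [h3] at h1
  apply Complex.ofReal_injective
  rw [← intervalIntegral.integral_ofReal]
  rw [Complex.ofReal_mul, Complex.ofReal_cpow ha.le]
  have e : (((β + γ - 1 : ℝ)) : ℂ) = (γ : ℂ) + β - 1 := by push_cast; ring
  rw [e, ← h1]
  apply intervalIntegral.integral_congr
  intro x hx
  rw [uIcc_of_le ha.le] at hx
  simp only
  rw [Complex.ofReal_mul, Complex.ofReal_cpow hx.1, Complex.ofReal_cpow (by linarith [hx.2])]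
  push_cast; rfl

theorem aux_triangle (t : ℝ) (ht : 0 ≤ t) (k : ℝ → ℝ → ℝ)
    (hk : Continuous (fun p : ℝ × ℝ => k p.1 p.2)) :
    ∫ s in (0:ℝ)..t, ∫ τ in (0:ℝ)..s, k s τ = ∫ τ in (0:ℝ)..t, ∫ s in τ..t, k s τ := by
  set H : ℝ → ℝ → ℝ := fun s τ => if τ ≤ s then k s τ else 0 with hH
  have hint : Integrable (Function.uncurry H)
      ((volume.restrict (Ioc 0 t)).prod (volume.restrict (Ioc 0 t))) := by
    have h1 : Integrable (fun p : ℝ × ℝ => k p.1 p.2)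
      ((volume.restrict (Ioc 0 t)).prod (volume.restrict (Ioc 0 t))) := by
      rw [Measure.prod_restrict]
      have : IntegrableOn (fun p : ℝ × ℝ => k p.1 p.2) (Icc 0 t ×ˢ Icc 0 t)
          ((volume : Measure ℝ).prod volume) :=
        hk.continuousOn.integrableOn_compact (isCompact_Icc.prod isCompact_Icc)
      exact this.mono_set (prod_mono Ioc_subset_Icc_self Ioc_subset_Icc_self)
    have hm : MeasurableSet {p : ℝ × ℝ | p.2 ≤ p.1} := measurableSet_le measurable_snd measurable_fst
    have := h1.indicator hm
    refine this.congr (Filter.Eventually.of_forall ?_)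
    rintro ⟨s, τ⟩
    simp [H, Function.uncurry, indicator]
  have hsw := integral_integral_swap hint
  rw [intervalIntegral.integral_of_le ht, intervalIntegral.integral_of_le ht]
  refine (setIntegral_congr_fun (g := fun s => ∫ τ in Ioc 0 t, H s τ) measurableSet_Ioc ?_).trans
    (hsw.trans (setIntegral_congr_fun (g := fun τ => ∫ s in Ioc 0 t, H s τ)
      measurableSet_Ioc ?_).symm)
  rotate_left
  · intro τ hτ
    simp only
    rw [intervalIntegral.integral_of_le hτ.2, ← integral_Icc_eq_integral_Ioc]
    have : (fun s => H s τ) = (Ici τ).indicator (fun s => k s τ) := by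
      ext s; simp [H, indicator]
    rw [this, setIntegral_indicator measurableSet_Ici]
    congr 2
    ext s; simp only [mem_Icc, mem_Ioc, mem_inter_iff, mem_Ici]; constructor
    · rintro ⟨a, b⟩; exact ⟨⟨hτ.1.trans_le a, b⟩, a⟩
    · rintro ⟨⟨a, b⟩, c⟩; exact ⟨c, b⟩
  · intro s hs
    simp only
    rw [intervalIntegral.integral_of_le hs.1.le]
    have : (fun τ => H s τ) = (Iic s).indicator (fun τ => k s τ) := by
      ext τ; simp [H, indicator]
    rw [this, setIntegral_indicator measurableSet_Iic]
    congr 2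
    ext τ; simp only [mem_Ioc, mem_inter_iff, mem_Iic]; constructor
    · rintro ⟨a, b⟩; exact ⟨⟨a, b.trans hs.2⟩, b⟩
    · rintro ⟨⟨a, b⟩, c⟩; exact ⟨a, c⟩

/-- Riemann-Liouville integral. -/
noncomputable def rlJ (β : ℝ) (u : ℝ → ℝ) (t : ℝ) : ℝ :=
  (1 / Real.Gamma β) * ∫ s in (0:ℝ)..t, (t - s) ^ (β - 1) * u s

theorem aux_cont {β : ℝ} (hβ : 1 ≤ β) : Continuous (fun x : ℝ => x ^ (β - 1)) :=
  Real.continuous_rpow_const (by linarith)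

theorem rlJ_comp {β γ t : ℝ} (hβ : 1 ≤ β) (hγ : 1 ≤ γ) (ht : 0 ≤ t) (u : ℝ → ℝ)
    (hu : Continuous u) : rlJ β (rlJ γ u) t = rlJ (β + γ) u t := by
  have hb := aux_cont hβ
  have hg := aux_cont hγ
  have hGb := Real.Gamma_pos_of_pos (show 0 < β by linarith)
  have hGg := Real.Gamma_pos_of_pos (show 0 < γ by linarith)
  have key := aux_triangle t ht (fun s τ => (t - s) ^ (β - 1) * ((s - τ) ^ (γ - 1) * u τ)) (by
    have h1 : Continuous (fun p : ℝ × ℝ => (t - p.1) ^ (β - 1)) := hb.comp (by fun_prop)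
    have h2 : Continuous (fun p : ℝ × ℝ => (p.1 - p.2) ^ (γ - 1)) := hg.comp (by fun_prop)
    fun_prop)
  have hin : ∀ τ ∈ Ioc 0 t, (∫ s in τ..t, (t - s) ^ (β - 1) * ((s - τ) ^ (γ - 1) * u τ))
      = (Real.Gamma β * Real.Gamma γ / Real.Gamma (β + γ)) * ((t - τ) ^ (β + γ - 1) * u τ) := by
    intro τ hτ
    rcases hτ.2.eq_or_lt with h | h
    · subst h
      rw [intervalIntegral.integral_same, sub_self, Real.zero_rpow (by linarith)]; ring
    · have h3 := intervalIntegral.integral_comp_add_right (a := 0) (b := t - τ)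
        (fun s => (t - s) ^ (β - 1) * ((s - τ) ^ (γ - 1) * u τ)) τ
      rw [zero_add, sub_add_cancel] at h3
      rw [← h3]
      have h4 := aux_beta (β := β) (γ := γ) (by linarith) (by linarith) (sub_pos.2 h)
      have : (fun x => (t - (x + τ)) ^ (β - 1) * ((x + τ - τ) ^ (γ - 1) * u τ))
        = fun x => (x ^ (γ - 1) * (t - τ - x) ^ (β - 1)) * u τ := by
        ext x
        rw [add_sub_cancel_right, show t - (x + τ) = t - τ - x by ring]; ring
      rw [this, intervalIntegral.integral_mul_const, h4]; ring
  unfold rlJ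
  have e1 : ∀ s, (t - s) ^ (β - 1) * (1 / Real.Gamma γ * ∫ τ in (0:ℝ)..s, (s - τ) ^ (γ - 1) * u τ)
      = (1 / Real.Gamma γ) * ∫ τ in (0:ℝ)..s, (t - s) ^ (β - 1) * ((s - τ) ^ (γ - 1) * u τ) := by
    intro s
    rw [intervalIntegral.integral_const_mul]; ring
  simp_rw [e1]
  rw [intervalIntegral.integral_const_mul, key]
  rw [intervalIntegral.integral_of_le ht, setIntegral_congr_fun measurableSet_Ioc hin,
    ← intervalIntegral.integral_of_le ht, intervalIntegral.integral_const_mul]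
  field_simp

theorem rlJ_one {β t : ℝ} (hβ : 1 ≤ β) :
    rlJ β (fun _ => 1) t = t ^ β / Real.Gamma (β + 1) := by
  have h := intervalIntegral.integral_comp_sub_left (a := 0) (b := t)
    (fun x => x ^ (β - 1)) t
  unfold rlJ
  simp only [mul_one]
  rw [h, sub_self, sub_zero, integral_rpow (by left; linarith), sub_add_cancel,
    Real.zero_rpow (by linarith), Real.Gamma_add_one (by linarith)]
  field_simp
  ring

theorem aux_sum {α β : ℝ} (hα : 1 ≤ α) (hβ : 1 ≤ β) (x : ℝ) :
    Summable (fun k : ℕ => x ^ k / Real.Gamma (α * k + β)) := by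
  rw [← summable_nat_add_iff 1]
  have h := (summable_nat_add_iff 1).2 (Real.summable_pow_div_factorial |x|)
  refine Summable.of_norm_bounded h ?_
  intro k
  have hk : (0:ℝ) ≤ k := Nat.cast_nonneg k
  have hle : ((k + 1 : ℕ) : ℝ) + 1 ≤ α * ((k + 1 : ℕ) : ℝ) + β := by
    push_cast; nlinarith
  have hG : ((k+1).factorial : ℝ) ≤ Real.Gamma (α * ((k + 1 : ℕ) : ℝ) + β) := by
    rw [← Real.Gamma_nat_eq_factorial]
    refine Real.Gamma_strictMonoOn_Ici.monotoneOn ?_ ?_ hle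
    · simp only [mem_Ici]; push_cast; linarith
    · simp only [mem_Ici]; push_cast at hle ⊢; linarith
  have hf : (0:ℝ) < ((k+1).factorial : ℝ) := by positivity
  rw [norm_div, norm_pow, Real.norm_eq_abs, Real.norm_eq_abs, abs_of_pos (hf.trans_le hG)]
  gcongr

theorem aux_cont2 {β : ℝ} (hβ : 1 ≤ β) (t : ℝ) : Continuous (fun s : ℝ => (t - s) ^ (β - 1)) :=
  (aux_cont hβ).comp (by fun_prop)

theorem rlJ_continuous {β : ℝ} (hβ : 1 ≤ β) (u : ℝ → ℝ) (hu : Continuous u) :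
    Continuous (rlJ β u) := by
  unfold rlJ
  refine continuous_const.mul ?_
  refine intervalIntegral.continuous_parametric_intervalIntegral_of_continuous
    (f := fun t s => (t - s) ^ (β - 1) * u s) (s := fun t => t) ?_ continuous_id
  have h2 : Continuous (fun p : ℝ × ℝ => (p.1 - p.2) ^ (β - 1)) :=
    (aux_cont hβ).comp (by fun_prop)
  change Continuous (fun p : ℝ × ℝ => (p.1 - p.2) ^ (β - 1) * u p.2)
  fun_prop

theorem rlJ_congr {β t : ℝ} (ht : 0 ≤ t) {u v : ℝ → ℝ} (h : ∀ s ∈ Icc 0 t, u s = v s) :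
    rlJ β u t = rlJ β v t := by
  unfold rlJ
  congr 1
  apply intervalIntegral.integral_congr
  intro s hs
  rw [uIcc_of_le ht] at hs
  simp only [h s hs]

theorem rlJ_lin {β t : ℝ} (hβ : 1 ≤ β) (c L : ℝ) {u v w : ℝ → ℝ} (hu : Continuous u)
    (hv : Continuous v) (hw : Continuous w) :
    rlJ β (fun s => c * u s + v s - L * w s) t = c * rlJ β u t + rlJ β v t - L * rlJ β w t := by
  have hc := aux_cont2 hβ t
  unfold rlJ
  have e : (fun s => (t - s) ^ (β - 1) * (c * u s + v s - L * w s)) = fun s =>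
      (c * ((t - s) ^ (β - 1) * u s) + (t - s) ^ (β - 1) * v s) - L * ((t - s) ^ (β - 1) * w s) := by
    ext s; ring
  rw [e, intervalIntegral.integral_sub, intervalIntegral.integral_add,
    intervalIntegral.integral_const_mul, intervalIntegral.integral_const_mul]
  · ring
  all_goals exact Continuous.intervalIntegrable (by fun_prop) _ _

theorem rlJ_bound {β t M : ℝ} (hβ : 1 ≤ β) (ht : 0 ≤ t) {u : ℝ → ℝ} (hu : Continuous u)
    (hM : ∀ s ∈ Icc 0 t, |u s| ≤ M) :
    |rlJ β u t| ≤ M * (t ^ β / Real.Gamma (β + 1)) := by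
  have hG := Real.Gamma_pos_of_pos (show 0 < β by linarith)
  have hc := aux_cont2 hβ t
  rw [← rlJ_one hβ]
  unfold rlJ
  rw [abs_mul, abs_of_pos (by positivity : 0 < 1 / Real.Gamma β), mul_left_comm]
  gcongr
  refine (intervalIntegral.abs_integral_le_integral_abs ht).trans ?_
  rw [← intervalIntegral.integral_const_mul]
  apply intervalIntegral.integral_mono_on ht
  · exact Continuous.intervalIntegrable (by fun_prop) _ _
  · exact Continuous.intervalIntegrable (by fun_prop) _ _
  intro s hs
  have h0 : 0 ≤ (t - s) ^ (β - 1) := Real.rpow_nonneg (by linarith [hs.2]) _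
  rw [abs_mul, abs_of_nonneg h0, mul_one, mul_comm]
  exact mul_le_mul_of_nonneg_right (hM s hs) h0

theorem rlJ_iter {α L c t : ℝ} (hα : 1 ≤ α) (ht : 0 ≤ t) {z h : ℝ → ℝ} (hz : Continuous z)
    (hh : Continuous h)
    (heq : ∀ s ∈ Icc 0 t, z s = c * rlJ 1 (fun _ => 1) s + rlJ α h s - L * rlJ α z s) (n : ℕ) :
    z t = ∑ k ∈ Finset.range (n + 1), (-L) ^ k *
        (c * rlJ (α * k + 1) (fun _ => 1) t + rlJ (α * k + α) h t)
      + (-L) ^ (n + 1) * rlJ (α * n + α) z t := by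
  induction n with
  | zero =>
    rw [heq t ⟨ht, le_rfl⟩]; simp; ring
  | succ n ih =>
    have hn : (0:ℝ) ≤ n := Nat.cast_nonneg n
    have hb : 1 ≤ α * n + α := by nlinarith
    have h1 : Continuous (fun _ : ℝ => (1:ℝ)) := continuous_const
    have hstep : rlJ (α * n + α) z t = c * rlJ (α * n + α + 1) (fun _ => 1) t
        + rlJ (α * n + α + α) h t - L * rlJ (α * n + α + α) z t := by
      rw [rlJ_congr ht heq, rlJ_lin hb c L (rlJ_continuous le_rfl _ h1) (rlJ_continuous hα _ hh)
        (rlJ_continuous hα _ hz), rlJ_comp hb le_rfl ht _ h1, rlJ_comp hb hα ht _ hh,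
        rlJ_comp hb hα ht _ hz]
    rw [Finset.sum_range_succ, ih, hstep]
    push_cast
    rw [show α * (n + 1 : ℝ) = α * n + α by ring]
    ring

theorem core {α L c t : ℝ} (hα : 1 ≤ α) (hL : 0 ≤ L) (ht : 0 < t) {z h : ℝ → ℝ}
    (hz : Continuous z) (hh : Continuous h)
    (heq : ∀ s ∈ Icc 0 t, z s = c * rlJ 1 (fun _ => 1) s + rlJ α h s - L * rlJ α z s)
    (hpos : ∀ s ∈ Icc 0 t, 0 ≤ h s)
    (hE : ∀ s ∈ Icc 0 t, 0 ≤ mlE α α (-(L * s ^ α))) :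
    c * t * mlE α 2 (-(L * t ^ α)) ≤ z t := by
  -- powers
  have hpow : ∀ (x : ℝ), 0 ≤ x → ∀ (k : ℕ) (b : ℝ), 0 ≤ b →
      (-L) ^ k * x ^ (α * k + b) = (-(L * x ^ α)) ^ k * x ^ b := by
    intro x hx k b hb
    have hk : (0:ℝ) ≤ α * k := by positivity
    rw [Real.rpow_add_of_nonneg hx hk hb, Real.rpow_mul hx, Real.rpow_natCast,
      show -(L * x ^ α) = (-L) * x ^ α by ring, mul_pow]
    ring
  have hA : HasSum (fun k : ℕ => (-L) ^ k * (c * rlJ (α * k + 1) (fun _ => 1) t))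
      (c * t * mlE α 2 (-(L * t ^ α))) := by
    have := ((aux_sum hα one_le_two (-(L * t ^ α))).hasSum).mul_left (c * t)
    refine (congrArg (fun F => HasSum F _) (funext fun k => ?_)).mpr this
    have hk : (0:ℝ) ≤ α * k := by positivity
    rw [rlJ_one (by linarith), show α * k + 1 + 1 = α * k + 2 by ring]
    have := hpow t ht.le k 1 zero_le_one
    rw [Real.rpow_one] at this
    rw [show ∀ a b d e : ℝ, a * (b * (d / e)) = b * (a * d) / e by intros; ring, this]
    ring
  obtain ⟨M, hM⟩ : ∃ M, ∀ s ∈ Icc 0 t, |h s| ≤ M := by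
    obtain ⟨M, hM⟩ := isCompact_Icc.exists_bound_of_continuousOn (s := Icc 0 t) hh.continuousOn
    exact ⟨M, hM⟩
  obtain ⟨N, hN⟩ : ∃ M, ∀ s ∈ Icc 0 t, |z s| ≤ M := by
    obtain ⟨M, hM⟩ := isCompact_Icc.exists_bound_of_continuousOn (s := Icc 0 t) hz.continuousOn
    exact ⟨M, hM⟩
  have hM0 : 0 ≤ M := (abs_nonneg _).trans (hM 0 ⟨le_rfl, ht.le⟩)
  have hB : HasSum (fun k : ℕ => (-L) ^ k * rlJ (α * k + α) h t)
      (∫ s in (0:ℝ)..t, (t - s) ^ (α - 1) * mlE α α (-(L * (t - s) ^ α)) * h s) := by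
    have e : ∀ k : ℕ, (-L) ^ k * rlJ (α * k + α) h t = ∫ s in (0:ℝ)..t,
        ((-L) ^ k * (1 / Real.Gamma (α * k + α))) * ((t - s) ^ (α * k + α - 1) * h s) := by
      intro k
      rw [intervalIntegral.integral_const_mul, mul_assoc]; rfl
    simp_rw [e]
    refine intervalIntegral.hasSum_integral_of_dominated_convergence
      (fun k _ => (L * t ^ α) ^ k / Real.Gamma (α * k + α) * (t ^ (α - 1) * M)) ?_ ?_ ?_ ?_ ?_
    · intro k
      have hk : (0:ℝ) ≤ α * k := by positivity
      have := aux_cont2 (β := α * k + α) (by linarith) t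
      exact Continuous.aestronglyMeasurable (by fun_prop)
    · intro k
      refine Filter.Eventually.of_forall fun s hs => ?_
      rw [uIoc_of_le ht.le] at hs
      have hts : 0 ≤ t - s := by linarith [hs.2]
      have hk : (0:ℝ) ≤ α * k := by positivity
      have hG := Real.Gamma_pos_of_pos (show 0 < α * k + α by linarith)
      have h1 := hpow (t - s) hts k (α - 1) (by linarith)
      rw [show ∀ a b d e : ℝ, a * (1 / b) * (d * e) = (a * d) / b * e by intros; ring,
        add_sub_assoc, h1, Real.norm_eq_abs, abs_mul, abs_div, abs_mul, abs_pow, abs_neg,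
        abs_of_pos hG, abs_of_nonneg (by positivity : 0 ≤ L * (t - s) ^ α),
        abs_of_nonneg (by positivity : 0 ≤ (t - s) ^ (α - 1)), mul_div_right_comm, mul_assoc]
      have hts' : t - s ≤ t := by linarith [hs.1]
      have := hM s ⟨hs.1.le, hs.2⟩
      have h3 : (t - s) ^ (α - 1) ≤ t ^ (α - 1) := Real.rpow_le_rpow hts hts' (by linarith)
      have h4 : (t - s) ^ α ≤ t ^ α := Real.rpow_le_rpow hts hts' (by linarith)
      gcongr
    · exact Filter.Eventually.of_forall fun s _ => (aux_sum hα hα _).mul_right _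
    · exact intervalIntegrable_const
    · refine Filter.Eventually.of_forall fun s hs => ?_
      rw [uIoc_of_le ht.le] at hs
      have hts : 0 ≤ t - s := by linarith [hs.2]
      have := ((aux_sum hα hα (-(L * (t - s) ^ α))).hasSum).mul_left ((t - s) ^ (α - 1) * h s)
      have h5 : (t - s) ^ (α - 1) * mlE α α (-(L * (t - s) ^ α)) * h s
        = (t - s) ^ (α - 1) * h s * mlE α α (-(L * (t - s) ^ α)) := by ring
      rw [h5]
      refine (congrArg (fun F => HasSum F _) (funext fun k => ?_)).mpr this
      have h1 := hpow (t - s) hts k (α - 1) (by linarith)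
      rw [show ∀ a b d e : ℝ, a * (1 / b) * (d * e) = (a * d) / b * e by intros; ring,
        add_sub_assoc, h1]
      ring
  have hBpos : 0 ≤ ∫ s in (0:ℝ)..t, (t - s) ^ (α - 1) * mlE α α (-(L * (t - s) ^ α)) * h s := by
    apply intervalIntegral.integral_nonneg ht.le
    intro s hs
    have hts : 0 ≤ t - s := by linarith [hs.2]
    have h1 := hE (t - s) ⟨hts, by linarith [hs.1]⟩
    have h2 := hpos s hs
    positivity
  have hR : Filter.Tendsto (fun n : ℕ => (-L) ^ (n + 1) * rlJ (α * n + α) z t) Filter.atTop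
      (nhds 0) := by
    have h1 := ((aux_sum hα le_rfl (L * t ^ α)).tendsto_atTop_zero).const_mul N
    rw [mul_zero] at h1
    refine squeeze_zero_norm ?_ (h1.comp (Filter.tendsto_add_atTop_nat 1))
    intro n
    have hn : (0:ℝ) ≤ α * n := by positivity
    have h2 := rlJ_bound (β := α * n + α) (by linarith) ht.le hz hN
    have h3 : t ^ (α * n + α) = (t ^ α) ^ (n + 1) := by
      rw [← Real.rpow_natCast, ← Real.rpow_mul ht.le]; push_cast; ring_nf
    rw [Real.norm_eq_abs, abs_mul, abs_pow, abs_neg, abs_of_nonneg hL]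
    calc L ^ (n + 1) * |rlJ (α * n + α) z t|
        ≤ L ^ (n + 1) * (N * (t ^ (α * n + α) / Real.Gamma (α * n + α + 1))) := by gcongr
      _ = _ := by
        simp only [Function.comp]
        rw [h3, mul_pow]; push_cast
        rw [show α * (n + 1 : ℝ) = α * n + α by ring]
        ring
  have hS := (((hA.add hB).tendsto_sum_nat.comp (Filter.tendsto_add_atTop_nat 1)).add hR)
  have hz' := tendsto_nhds_unique (hS.congr (f₂ := fun _ => z t) (fun n => by
    rw [rlJ_iter hα ht.le hz hh heq n]
    simp only [Function.comp, mul_add])) tendsto_const_nhds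
  linarith

end

open MeasureTheory Set in
/-- Separation theorem for solutions with identical initial values but different
initial slopes (Theorem 2.7 of the paper). -/
theorem solutions_separate_equal_initial_value
    (α T Tstar L y₁₀ y₁₁ y₂₀ y₂₁ : ℝ) (hα₁ : 1 < α) (hα₂ : α < 2)
    (hT : 0 < T) (hL : 0 < L)
    (f : ℝ → ℝ → ℝ)
    (hf_cont : ContinuousOn (fun p : ℝ × ℝ => f p.1 p.2) (Set.Icc 0 T ×ˢ Set.univ))
    (hf_lip : ∀ t ∈ Set.Icc (0 : ℝ) T, ∀ x y : ℝ, |f t x - f t y| ≤ L * |x - y|)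
    (y₁ y₂ : ℝ → ℝ)
    (hy₁cont : ContinuousOn y₁ (Set.Icc 0 T)) (hy₂cont : ContinuousOn y₂ (Set.Icc 0 T))
    (hy₁ : ∀ t ∈ Set.Icc (0 : ℝ) T,
      y₁ t = y₁₀ + y₁₁ * t
        + (1 / Real.Gamma α) * ∫ s in (0 : ℝ)..t, (t - s) ^ (α - 1) * f s (y₁ s))
    (hy₂ : ∀ t ∈ Set.Icc (0 : ℝ) T,
      y₂ t = y₂₀ + y₂₁ * t
        + (1 / Real.Gamma α) * ∫ s in (0 : ℝ)..t, (t - s) ^ (α - 1) * f s (y₂ s))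
    (h0 : y₁₀ = y₂₀) (h1 : y₁₁ < y₂₁)
    (hTstar : 0 < Tstar) (hTstarT : Tstar ≤ T)
    (hposαα : ∀ t ∈ Set.Icc (0 : ℝ) Tstar, mlE α α (-(L * t ^ α)) > 0)
    (hposα2 : ∀ t ∈ Set.Icc (0 : ℝ) Tstar, mlE α 2 (-(L * t ^ α)) > 0) :
    ∀ t ∈ Set.Ioc (0 : ℝ) Tstar, y₁ t < y₂ t := by
  set c := y₂₁ - y₁₁ with hc
  have hcpos : 0 < c := sub_pos.2 h1
  have hTle : (0:ℝ) ≤ T := hT.le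
  have hα : 1 ≤ α := hα₁.le
  have key : ∀ y : ℝ → ℝ, ContinuousOn y (Icc 0 T) →
      ContinuousOn (fun s => f s (y s)) (Icc 0 T) := by
    intro y hy
    have := hf_cont.comp (f := fun s => (s, y s)) (s := Icc 0 T) (continuousOn_id.prodMk hy)
      (fun s hs => ⟨hs, mem_univ _⟩)
    exact this
  have ext : ∀ u : ℝ → ℝ, ContinuousOn u (Icc 0 T) →
      ∃ v : ℝ → ℝ, Continuous v ∧ ∀ s ∈ Icc 0 T, v s = u s := by
    intro u hu
    refine ⟨IccExtend hTle ((Icc 0 T).domRestrict u), hu.domRestrict.Icc_extend', ?_⟩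
    intro s hs
    rw [IccExtend_of_mem _ _ hs]; rfl
  obtain ⟨F₁, hF₁c, hF₁⟩ := ext _ (key y₁ hy₁cont)
  obtain ⟨F₂, hF₂c, hF₂⟩ := ext _ (key y₂ hy₂cont)
  obtain ⟨Z, hZc, hZ⟩ := ext _ (hy₂cont.sub hy₁cont)
  have hZ' : ∀ s ∈ Icc 0 T, Z s = y₂ s - y₁ s := hZ
  have rl : ∀ (y F : ℝ → ℝ), (∀ s ∈ Icc 0 T, F s = f s (y s)) → ∀ t ∈ Icc 0 T,
      (1 / Real.Gamma α) * (∫ s in (0 : ℝ)..t, (t - s) ^ (α - 1) * f s (y s)) = rlJ α F t := by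
    intro y F hF t ht
    exact rlJ_congr ht.1 (u := fun s => f s (y s))
      (fun s hs => (hF s ⟨hs.1, hs.2.trans ht.2⟩).symm)
  have hone : ∀ s : ℝ, rlJ 1 (fun _ => 1) s = s := by
    intro s
    rw [rlJ_one le_rfl, Real.rpow_one, one_add_one_eq_two, Real.Gamma_two, div_one]
  have hZeq : ∀ s ∈ Icc 0 T, Z s = c * s + (rlJ α F₂ s - rlJ α F₁ s) := by
    intro s hs
    rw [hZ' s hs, hy₁ s hs, hy₂ s hs, rl y₁ F₁ hF₁ s hs, rl y₂ F₂ hF₂ s hs, h0, hc]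
    ring
  set h : ℝ → ℝ := fun s => F₂ s - F₁ s + L * Z s with hh
  have hhc : Continuous h := by fun_prop
  have heq : ∀ s ∈ Icc 0 T, Z s = c * rlJ 1 (fun _ => 1) s + rlJ α h s - L * rlJ α Z s := by
    intro s hs
    have e1 := rlJ_lin (t := s) hα L 1 hZc hF₂c hF₁c
    have e2 : h = fun s => L * Z s + F₂ s - 1 * F₁ s := by
      ext s; simp only [hh]; ring
    rw [hone, hZeq s hs, e2, e1]; ring
  have hhpos : ∀ s ∈ Icc 0 T, 0 ≤ Z s → 0 ≤ h s := by
    intro s hs hz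
    have := hf_lip s hs (y₂ s) (y₁ s)
    rw [← hZ' s hs, abs_of_nonneg hz, ← hF₁ s hs, ← hF₂ s hs] at this
    have := (abs_le.1 this).1
    simp only [hh]; linarith
  -- small times
  obtain ⟨M, hM⟩ : ∃ M, ∀ s ∈ Icc 0 T, |F₂ s - F₁ s| ≤ M := by
    obtain ⟨M, hM⟩ := isCompact_Icc.exists_bound_of_continuousOn (s := Icc 0 T)
      (hF₂c.sub hF₁c).continuousOn
    exact ⟨M, hM⟩
  obtain ⟨δ, hδ, hsmall⟩ : ∃ δ > 0, ∀ s ∈ Icc 0 T, 0 < s → s < δ → 0 < Z s := by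
    have hcont : Filter.Tendsto (fun s : ℝ => M / Real.Gamma (α + 1) * s ^ (α - 1)) (nhds 0)
        (nhds 0) := by
      have h1 : Continuous (fun s : ℝ => M / Real.Gamma (α + 1) * s ^ (α - 1)) :=
        continuous_const.mul (aux_cont hα)
      have := h1.tendsto 0
      rwa [Real.zero_rpow (by linarith), mul_zero] at this
    obtain ⟨δ, hδ, hd⟩ := Metric.eventually_nhds_iff.1 (hcont.eventually (gt_mem_nhds hcpos))
    refine ⟨δ, hδ, fun s hs hs0 hsd => ?_⟩
    have h2 := hd (y := s) (by rw [Real.dist_eq, sub_zero, abs_of_pos hs0]; exact hsd)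
    have h3 := rlJ_bound hα hs.1 (u := fun s => F₂ s - F₁ s) (M := M) (by fun_prop)
      (fun r hr => hM r ⟨hr.1, hr.2.trans hs.2⟩)
    have h4 : rlJ α (fun s => F₂ s - F₁ s) s = rlJ α F₂ s - rlJ α F₁ s := by
      have := rlJ_lin (t := s) hα 0 1 hF₂c hF₂c hF₁c
      simpa using this
    rw [h4] at h3
    have h5 : s ^ α = s ^ (α - 1) * s := by
      rw [← Real.rpow_add_one hs0.ne', sub_add_cancel]
    have h6 : M * (s ^ α / Real.Gamma (α + 1)) = M / Real.Gamma (α + 1) * s ^ (α - 1) * s := by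
      rw [h5]; ring
    rw [h6] at h3
    have h7 := (abs_le.1 h3).1
    have h8 := mul_lt_mul_of_pos_right h2 hs0
    rw [hZeq s hs]
    linarith
  intro t ht
  have htT : t ≤ T := ht.2.trans hTstarT
  by_contra hneg
  have hZt : Z t ≤ 0 := by
    rw [hZ' t ⟨ht.1.le, htT⟩]; linarith
  have hδt : δ ≤ t := by
    by_contra hlt
    have := hsmall t ⟨ht.1.le, htT⟩ ht.1 (not_le.1 hlt)
    linarith
  have hcomp : IsCompact (Icc δ t ∩ {s | Z s ≤ 0}) :=
    isCompact_Icc.inter_right (isClosed_le hZc continuous_const)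
  obtain ⟨t₀, ht₀, hleast⟩ := hcomp.exists_isLeast ⟨t, ⟨hδt, le_rfl⟩, hZt⟩
  have ht₀pos : 0 < t₀ := lt_of_lt_of_le hδ ht₀.1.1
  have ht₀T : t₀ ≤ Tstar := ht₀.1.2.trans ht.2
  have hZ0 : Z 0 = 0 := by
    rw [hZeq 0 ⟨le_rfl, hTle⟩]; simp [rlJ]
  have hnn : ∀ s ∈ Ico 0 t₀, 0 ≤ Z s := by
    intro s hs
    rcases hs.1.eq_or_lt with h | h
    · rw [← h, hZ0]
    have hsT : s ≤ T := by linarith [hs.2]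
    rcases lt_or_ge s δ with hd | hd
    · exact (hsmall s ⟨hs.1, hsT⟩ h hd).le
    · by_contra hcon
      have := hleast ⟨⟨hd, hs.2.le.trans ht₀.1.2⟩, (not_le.1 hcon).le⟩
      linarith [hs.2]
  have hnn' : ∀ s ∈ Icc 0 t₀, 0 ≤ Z s := by
    have hcl : IsClosed {s | 0 ≤ Z s} := isClosed_le continuous_const hZc
    have := hcl.closure_subset_iff.2 (show Ico 0 t₀ ⊆ {s | 0 ≤ Z s} from hnn)
    rw [closure_Ico ht₀pos.ne] at this
    exact this
  have hsub : ∀ s ∈ Icc 0 t₀, s ∈ Icc 0 T := fun s hs => ⟨hs.1, by linarith [hs.2]⟩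
  have hfin := core (α := α) (L := L) (c := c) (t := t₀) hα hL.le ht₀pos hZc hhc
    (fun s hs => heq s (hsub s hs)) (fun s hs => hhpos s (hsub s hs) (hnn' s hs))
    (fun s hs => (hposαα s ⟨hs.1, hs.2.trans ht₀T⟩).le)
  have hE2 := hposα2 t₀ ⟨ht₀pos.le, ht₀T⟩
  have : 0 < c * t₀ * mlE α 2 (-(L * t₀ ^ α)) := by positivity
  have := ht₀.2
  simp only [mem_ofPred_eq] at this
  linarith
end

section
/- Let α ∈ (1,2), T > 0, let a : [0,T] → ℝ be continuous, set L := max_{t∈[0,T]} |a(t)|, and for t ∈ [0,T] define a*(t) := max_{τ∈[0,t]} a(τ). Let y₁, y₂ : [0,T] → ℝ be continuous and satisfy yₖ(t) = y_{k,0} + y_{k,1} t + (1/Γ(α)) ∫₀ᵗ (t−s)^{α−1} a(s) yₖ(s) ds for k = 1, 2, with y_{1,0} ≤ y_{2,0} and y_{1,1} ≤ y_{2,1}. Suppose T* ∈ (0,T] is such that for all t ∈ [0,T*]: E_{α,α}(−L t^α) > 0 and either [(y_{2,0} − y_{1,0}) E_{α,1}(−L t^α) + (y_{2,1} − y_{1,1})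 t E_{α,2}(−L t^α) > 0] or [y_{1,0} = y_{2,0}, y_{1,1} < y_{2,1}, and E_{α,2}(−L t^α) > 0]. Then for all t ∈ [0,T*]: |y₂(t) − y₁(t)| ≤ |y_{2,0} − y_{1,0}| · E_{α,1}(a*(t) t^α) + |y_{2,1} − y_{1,1}| · t E_{α,2}(a*(t) t^α). -/
/-- Truncated power kernel. -/
noncomputable def flK (p x : ℝ) : ℝ := (max x 0) ^ (p - 1) / Real.Gamma p

lemma flK_cont {p : ℝ} (hp : 1 ≤ p) : Continuous (flK p) := by
  unfold flK
  refine Continuous.div_const ?_ _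
  exact (continuous_id.max continuous_const).rpow_const (fun x => Or.inr (by linarith))

lemma flK_nonneg {p : ℝ} (hp : 1 ≤ p) (x : ℝ) : 0 ≤ flK p x := by
  unfold flK
  have := Real.Gamma_pos_of_pos (show 0 < p by linarith)
  positivity

lemma flK_mono {p : ℝ} (hp : 1 ≤ p) : Monotone (flK p) := by
  intro x y hxy
  unfold flK
  have := Real.Gamma_pos_of_pos (show 0 < p by linarith)
  gcongr

lemma flK_neg {p x : ℝ} (hp : 1 < p) (hx : x ≤ 0) : flK p x = 0 := by
  unfold flK
  rw [max_eq_right hx, Real.zero_rpow (by linarith)]; simp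

lemma flK_pos_eq {p x : ℝ} (hx : 0 ≤ x) : flK p x = x ^ (p - 1) / Real.Gamma p := by
  unfold flK
  rw [max_eq_left hx]

lemma real_beta {p q t : ℝ} (hp : 0 < p) (hq : 0 < q) (ht : 0 < t) :
    ∫ s in (0 : ℝ)..t, s ^ (q - 1) * (t - s) ^ (p - 1)
      = t ^ (q + p - 1) * (Real.Gamma q * Real.Gamma p / Real.Gamma (q + p)) := by
  have h := Complex.betaIntegral_scaled (q : ℂ) (p : ℂ) ht
  rw [Complex.betaIntegral_eq_Gamma_mul_div _ _ (by simpa) (by simpa)] at h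
  rw [← Complex.ofReal_add, Complex.Gamma_ofReal, Complex.Gamma_ofReal, Complex.Gamma_ofReal] at h
  apply Complex.ofReal_injective
  rw [← intervalIntegral.integral_ofReal]
  have e : (∫ s in (0 : ℝ)..t, ((s ^ (q - 1) * (t - s) ^ (p - 1) : ℝ) : ℂ))
      = ∫ x in (0 : ℝ)..t, (x : ℂ) ^ ((q : ℂ) - 1) * ((t : ℂ) - x) ^ ((p : ℂ) - 1) := by
    apply intervalIntegral.integral_congr
    intro s hs
    rw [Set.uIcc_of_le ht.le] at hs
    simp only
    rw [Complex.ofReal_mul, Complex.ofReal_cpow hs.1, Complex.ofReal_cpow (by linarith [hs.2])]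
    push_cast
    rfl
  rw [e, h]
  push_cast
  rw [Complex.ofReal_cpow ht.le]
  push_cast
  rfl

lemma flK_beta {p q t : ℝ} (hp : 1 < p) (hq : 1 ≤ q) (ht : 0 ≤ t) :
    ∫ s in (0 : ℝ)..t, flK p (t - s) * flK q s = flK (p + q) t := by
  rcases ht.eq_or_lt with rfl | ht
  · rw [intervalIntegral.integral_same, flK_neg (by linarith) le_rfl]
  have e : ∫ s in (0 : ℝ)..t, flK p (t - s) * flK q s
      = ∫ s in (0 : ℝ)..t, (s ^ (q - 1) * (t - s) ^ (p - 1)) * (1 / (Real.Gamma p * Real.Gamma q)) := by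
    apply intervalIntegral.integral_congr
    intro s hs
    rw [Set.uIcc_of_le ht.le] at hs
    simp only
    rw [flK_pos_eq hs.1, flK_pos_eq (by linarith [hs.2])]
    field_simp
  rw [e, intervalIntegral.integral_mul_const, real_beta (by linarith) (by linarith) ht,
    flK_pos_eq ht.le]
  have := Real.Gamma_pos_of_pos (show 0 < p by linarith)
  have := Real.Gamma_pos_of_pos (show 0 < q by linarith)
  rw [add_comm q p]
  field_simp

/-- Fractional integral. -/
noncomputable def flJ (p : ℝ) (h : ℝ → ℝ) (t : ℝ) : ℝ := ∫ s in (0 : ℝ)..t, flK p (t - s) * h s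

lemma flJ_cont {p : ℝ} (hp : 1 ≤ p) {h : ℝ → ℝ} (hh : Continuous h) : Continuous (flJ p h) := by
  unfold flJ
  have := flK_cont hp
  refine intervalIntegral.continuous_parametric_intervalIntegral_of_continuous
    (f := fun t s => flK p (t - s) * h s) ?_ continuous_id
  simp only [Function.uncurry_def]
  fun_prop

lemma flJ_ext {p t T : ℝ} (hp : 1 < p) {h : ℝ → ℝ} (hh : Continuous h) (htT : t ≤ T) :
    flJ p h t = ∫ s in (0 : ℝ)..T, flK p (t - s) * h s := by
  unfold flJ
  have := flK_cont hp.le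
  have hc : Continuous (fun s => flK p (t - s) * h s) := by fun_prop
  rw [← intervalIntegral.integral_add_adjacent_intervals (b := t) (c := T) (hc.intervalIntegrable _ _)
    (hc.intervalIntegrable _ _)]
  have : ∫ s in t..T, flK p (t - s) * h s = ∫ s in t..T, (0 : ℝ) := by
    apply intervalIntegral.integral_congr
    intro s hs
    rw [Set.uIcc_of_le htT] at hs
    simp only
    rw [flK_neg hp (by linarith [hs.1]), zero_mul]
  rw [this]; simp

lemma flJ_comp {p q t : ℝ} (hp : 1 < p) (hq : 1 < q) {h : ℝ → ℝ} (hh : Continuous h)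
    (ht : 0 ≤ t) : flJ p (flJ q h) t = flJ (p + q) h t := by
  have hKp := flK_cont hp.le
  have hKq := flK_cont hq.le
  have e1 : flJ p (flJ q h) t
      = ∫ s in (0 : ℝ)..t, ∫ r in (0 : ℝ)..t, flK p (t - s) * (flK q (s - r) * h r) := by
    rw [flJ]
    apply intervalIntegral.integral_congr
    intro s hs
    rw [Set.uIcc_of_le ht] at hs
    simp only
    rw [flJ_ext hq hh hs.2, intervalIntegral.integral_const_mul]
  rw [e1, MeasureTheory.intervalIntegral_intervalIntegral_swap, flJ]
  · apply intervalIntegral.integral_congr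
    intro r hr
    rw [Set.uIcc_of_le ht] at hr
    simp only
    have hc : Continuous (fun s => flK p (t - s) * (flK q (s - r) * h r)) := by fun_prop
    rw [← intervalIntegral.integral_add_adjacent_intervals (b := r) (hc.intervalIntegrable _ _)
      (hc.intervalIntegrable _ _)]
    have z : ∫ s in (0 : ℝ)..r, flK p (t - s) * (flK q (s - r) * h r)
        = ∫ s in (0 : ℝ)..r, (0 : ℝ) := by
      apply intervalIntegral.integral_congr
      intro s hs
      rw [Set.uIcc_of_le hr.1] at hs
      simp only
      rw [flK_neg hq (by linarith [hs.2])]; ring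
    rw [z, intervalIntegral.integral_zero, zero_add]
    have hb := flK_beta hp hq.le (show 0 ≤ t - r by linarith [hr.2])
    rw [← hb, ← intervalIntegral.integral_mul_const]
    have := intervalIntegral.integral_comp_sub_right (a := r) (b := t)
      (fun s => flK p (t - r - s) * flK q s * h r) r
    rw [sub_self] at this
    rw [← this]
    congr 1
    ext s
    rw [show t - r - (s - r) = t - s by ring]; ring
  · have hc : Continuous (Function.uncurry
        (fun s r => flK p (t - s) * (flK q (s - r) * h r))) := by
      simp only [Function.uncurry_def]
      fun_prop
    exact (hc.continuousOn.integrableOn_compact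
      ((isCompact_uIcc (a := (0 : ℝ)) (b := t)).prod (isCompact_uIcc (a := (0 : ℝ)) (b := t)))).mono_set
      (Set.prod_mono Set.uIoc_subset_uIcc Set.uIoc_subset_uIcc)

lemma ml_summable {α β : ℝ} (hα : 1 < α) (hβ : 1 ≤ β) (x : ℝ) :
    Summable (fun k : ℕ => x ^ k / Real.Gamma (α * k + β)) := by
  rw [← summable_nat_add_iff 1]
  have h := (summable_nat_add_iff (f := fun k : ℕ => |x| ^ k / (k.factorial : ℝ)) 1).2
    (Real.summable_pow_div_factorial |x|)
  refine Summable.of_norm_bounded h ?_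
  intro k
  rw [norm_div, norm_pow, Real.norm_eq_abs, Real.norm_eq_abs]
  have h1 : ((k + 1).factorial : ℝ) ≤ Real.Gamma (α * ((k + 1 : ℕ) : ℝ) + β) := by
    rw [← Real.Gamma_nat_eq_factorial]
    have hk : (0 : ℝ) ≤ k := Nat.cast_nonneg k
    push_cast
    apply Real.Gamma_strictMonoOn_Ici.monotoneOn
    · simp; linarith
    · simp; nlinarith
    · nlinarith
  have h2 : (0 : ℝ) < ((k + 1).factorial : ℝ) := by positivity
  rw [abs_of_pos (lt_of_lt_of_le h2 h1)]
  gcongr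

lemma flK_ml {α β t lam : ℝ} (ht : 0 < t) (k : ℕ) :
    lam ^ k * flK (α * k + β) t
      = t ^ (β - 1) * ((lam * t ^ α) ^ k / Real.Gamma (α * k + β)) := by
  rw [flK_pos_eq ht.le, show α * k + β - 1 = α * k + (β - 1) by ring, Real.rpow_add ht,
    Real.rpow_mul_natCast ht.le, mul_pow]
  ring

lemma flK_summable {α β t lam : ℝ} (hα : 1 < α) (hβ : 1 ≤ β) :
    Summable (fun k : ℕ => lam ^ k * flK (α * k + β) t) := by
  rcases lt_or_ge 0 t with ht | ht
  · simp_rw [flK_ml ht]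
    exact (ml_summable hα hβ _).mul_left _
  · rw [← summable_nat_add_iff 1]
    convert summable_zero with k
    rw [flK_neg _ ht, mul_zero]
    have hk : (0 : ℝ) ≤ k := Nat.cast_nonneg k
    push_cast
    nlinarith

lemma flK_hasSum {α β t lam : ℝ} (hα : 1 < α) (hβ : 1 ≤ β) (ht : 0 < t) :
    HasSum (fun k : ℕ => lam ^ k * flK (α * k + β) t) (t ^ (β - 1) * mlE α β (lam * t ^ α)) := by
  simp_rw [flK_ml ht]
  exact (ml_summable hα hβ _).hasSum.mul_left _

lemma flJ_add {p : ℝ} (hp : 1 ≤ p) {f h : ℝ → ℝ} (hf : Continuous f) (hh : Continuous h) (t : ℝ) :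
    flJ p (fun s => f s + h s) t = flJ p f t + flJ p h t := by
  have := flK_cont hp
  unfold flJ
  rw [← intervalIntegral.integral_add]
  · simp_rw [mul_add]
  · exact Continuous.intervalIntegrable (by fun_prop) _ _
  · exact Continuous.intervalIntegrable (by fun_prop) _ _

lemma flJ_smul {p c : ℝ} {f : ℝ → ℝ} (t : ℝ) :
    flJ p (fun s => c * f s) t = c * flJ p f t := by
  unfold flJ
  rw [← intervalIntegral.integral_const_mul]
  congr 1
  ext s
  ring

lemma flJ_congr {p t : ℝ} {f h : ℝ → ℝ} (ht : 0 ≤ t) (H : ∀ s ∈ Set.Icc 0 t, f s = h s) :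
    flJ p f t = flJ p h t := by
  unfold flJ
  apply intervalIntegral.integral_congr
  intro s hs
  rw [Set.uIcc_of_le ht] at hs
  simp only
  rw [H s hs]

lemma voc_iter {α T lam c0 c1 : ℝ} (hα : 1 < α) {z g : ℝ → ℝ} (hz : Continuous z)
    (hg : Continuous g)
    (H : ∀ s ∈ Set.Icc 0 T, z s = c0 * flK 1 s + c1 * flK 2 s + flJ α g s + lam * flJ α z s)
    (n : ℕ) : ∀ t ∈ Set.Icc 0 T, z t = (∑ k ∈ Finset.range (n + 1),
      lam ^ k * (c0 * flK (α * k + 1) t + c1 * flK (α * k + 2) t + flJ (α * k + α) g t))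
      + lam ^ (n + 1) * flJ (α * n + α) z t := by
  intro t ht
  induction n with
  | zero => simpa using H t ht
  | succ n ih =>
    have hn : (0 : ℝ) ≤ n := Nat.cast_nonneg n
    have hp : 1 < α * n + α := by nlinarith
    have k1 := flK_cont (le_refl (1 : ℝ))
    have k2 := flK_cont (show (1 : ℝ) ≤ 2 by norm_num)
    have kg := flJ_cont hα.le hg
    have kz := flJ_cont hα.le hz
    have e : flJ (α * n + α) z t = c0 * flK (α * (n + 1 : ℕ) + 1) t
        + c1 * flK (α * (n + 1 : ℕ) + 2) t + flJ (α * (n + 1 : ℕ) + α) g t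
        + lam * flJ (α * (n + 1 : ℕ) + α) z t := by
      rw [flJ_congr (h := fun s => c0 * flK 1 s + c1 * flK 2 s + flJ α g s + lam * flJ α z s) ht.1
        (fun s hs => H s ⟨hs.1, hs.2.trans ht.2⟩)]
      rw [flJ_add hp.le (by fun_prop) (by fun_prop), flJ_add hp.le (by fun_prop) (by fun_prop),
        flJ_add hp.le (by fun_prop) (by fun_prop), flJ_smul, flJ_smul, flJ_smul,
        flJ_comp hp hα hg ht.1, flJ_comp hp hα hz ht.1]
      have b1 : flJ (α * n + α) (flK 1) t = _ := flK_beta hp le_rfl ht.1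
      have b2 : flJ (α * n + α) (flK 2) t = _ := flK_beta hp one_le_two ht.1
      rw [b1, b2]
      push_cast
      rw [show α * ((n : ℝ) + 1) = α * n + α by ring]
    rw [Finset.sum_range_succ, ih, e]
    ring

/-- Resolvent kernel. -/
noncomputable def flR (α lam x : ℝ) : ℝ := ∑' k : ℕ, lam ^ k * flK (α * k + α) x

lemma one_lt_aux {α : ℝ} (hα : 1 < α) (k : ℕ) : 1 < α * k + α := by
  have hn : (0 : ℝ) ≤ k := Nat.cast_nonneg k
  nlinarith

lemma flR_cont {α lam : ℝ} (hα : 1 < α) : Continuous (flR α lam) := by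
  rw [continuous_iff_continuousAt]
  intro x
  have : ContinuousOn (flR α lam) (Set.Iic (x + 1)) := by
    refine continuousOn_tsum (u := fun k : ℕ => |lam| ^ k * flK (α * k + α) (x + 1)) ?_
      (flK_summable hα hα.le) ?_
    · intro k
      exact (continuous_const.mul (flK_cont (one_lt_aux hα k).le)).continuousOn
    · intro k y hy
      have h1 := (one_lt_aux hα k).le
      rw [norm_mul, norm_pow, Real.norm_eq_abs, Real.norm_eq_abs, abs_of_nonneg (flK_nonneg h1 _)]
      exact mul_le_mul_of_nonneg_left (flK_mono h1 hy) (by positivity)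
  exact this.continuousAt (Iic_mem_nhds (by linarith))

lemma flJ_hasSum {α lam t : ℝ} (hα : 1 < α) (ht : 0 ≤ t) {g : ℝ → ℝ} (hg : Continuous g) :
    HasSum (fun k : ℕ => lam ^ k * flJ (α * k + α) g t)
      (∫ s in (0 : ℝ)..t, flR α lam (t - s) * g s) := by
  have hc : ∀ k : ℕ, Continuous (flK (α * k + α)) := fun k => flK_cont (one_lt_aux hα k).le
  have := intervalIntegral.hasSum_integral_of_dominated_convergence (μ := MeasureTheory.volume)
    (a := 0) (b := t)
    (F := fun (k : ℕ) s => lam ^ k * (flK (α * k + α) (t - s) * g s))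
    (f := fun s => flR α lam (t - s) * g s)
    (fun k s => |lam| ^ k * flK (α * k + α) t * |g s|) ?_ ?_ ?_ ?_ ?_
  · simp_rw [intervalIntegral.integral_const_mul] at this
    exact this
  · intro k
    have := hc k
    exact Continuous.aestronglyMeasurable (by fun_prop)
  · intro k
    refine Filter.Eventually.of_forall (fun s hs => ?_)
    rw [Set.uIoc_of_le ht] at hs
    have h1 := (one_lt_aux hα k).le
    rw [norm_mul, norm_mul, norm_pow, Real.norm_eq_abs, Real.norm_eq_abs, Real.norm_eq_abs,
      abs_of_nonneg (flK_nonneg h1 _), ← mul_assoc]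
    exact mul_le_mul_of_nonneg_right (mul_le_mul_of_nonneg_left
      (flK_mono h1 (by linarith [hs.1])) (by positivity)) (abs_nonneg _)
  · exact Filter.Eventually.of_forall (fun s _ => (flK_summable hα hα.le).mul_right _)
  · simp_rw [tsum_mul_right]
    exact Continuous.intervalIntegrable (by fun_prop) _ _
  · refine Filter.Eventually.of_forall (fun s _ => ?_)
    simp_rw [← mul_assoc]
    exact (flK_summable hα hα.le).hasSum.mul_right _

lemma voc {α T lam c0 c1 : ℝ} (hα : 1 < α) {z g : ℝ → ℝ} (hz : Continuous z)
    (hg : Continuous g)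
    (H : ∀ s ∈ Set.Icc 0 T, z s = c0 * flK 1 s + c1 * flK 2 s + flJ α g s + lam * flJ α z s)
    {t : ℝ} (ht : 0 < t) (htT : t ≤ T) :
    z t = c0 * mlE α 1 (lam * t ^ α) + c1 * (t * mlE α 2 (lam * t ^ α))
      + ∫ s in (0 : ℝ)..t, flR α lam (t - s) * g s := by
  have h1 := (flK_hasSum (lam := lam) hα (le_refl (1 : ℝ)) ht).mul_left c0
  have h2 := (flK_hasSum (lam := lam) hα (one_le_two) ht).mul_left c1
  have h3 := flJ_hasSum (lam := lam) hα ht.le hg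
  have hs := ((h1.add h2).add h3).tendsto_sum_nat.comp (Filter.tendsto_add_atTop_nat 1)
  have hr := ((flJ_hasSum (lam := lam) hα ht.le hz).summable.tendsto_atTop_zero).const_mul lam
  have hh := hs.add hr
  have hcz : Filter.Tendsto (fun _ : ℕ => z t) Filter.atTop (nhds (z t)) := tendsto_const_nhds
  have := tendsto_nhds_unique (hcz.congr (fun n => ?_)) hh
  · rw [this]
    norm_num
  · rw [voc_iter hα hz hg H n t ⟨ht.le, htT⟩]
    simp only [Function.comp]
    rw [pow_succ']
    congr 1
    · apply Finset.sum_congr rfl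
      intro k _
      ring
    · ring

lemma flR_eq {α lam x : ℝ} (hα : 1 < α) (hx : 0 < x) :
    flR α lam x = x ^ (α - 1) * mlE α α (lam * x ^ α) :=
  (flK_hasSum hα hα.le hx).tsum_eq

lemma flR_nonneg {α lam x L S : ℝ} (hα : 1 < α) (hlam : -L ≤ lam)
    (hE : ∀ t ∈ Set.Icc (0 : ℝ) S, mlE α α (-(L * t ^ α)) > 0) (hx : x ≤ S) :
    0 ≤ flR α lam x := by
  have hα0 : 0 < α := by linarith
  rcases le_or_gt x 0 with h | h
  · unfold flR
    apply tsum_nonneg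
    intro k
    rw [flK_neg (one_lt_aux hα k) h, mul_zero]
  rcases le_or_gt 0 lam with h' | h'
  · unfold flR
    exact tsum_nonneg (fun k => mul_nonneg (pow_nonneg h' _) (flK_nonneg (one_lt_aux hα k).le _))
  have hL : 0 < L := by linarith
  rw [flR_eq hα h]
  refine mul_nonneg (by positivity) ?_
  have hq : 0 ≤ -lam / L := div_nonneg (by linarith) hL.le
  have hq1 : -lam / L ≤ 1 := by rw [div_le_one hL]; linarith
  have hq2 : (-lam / L) ^ (1 / α) ≤ 1 := Real.rpow_le_one hq hq1 (by positivity)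
  have hq3 : 0 ≤ (-lam / L) ^ (1 / α) := by positivity
  have := hE (x * (-lam / L) ^ (1 / α)) ⟨by positivity, by nlinarith⟩
  rw [Real.mul_rpow h.le hq3, ← Real.rpow_mul hq, one_div_mul_cancel hα0.ne', Real.rpow_one] at this
  rw [show lam * x ^ α = -(L * (x ^ α * (-lam / L))) by field_simp]
  exact this.le

lemma positivity_volterra {S C : ℝ} {z v : ℝ → ℝ} {R b : ℝ → ℝ} (hz : Continuous z)
    (hR : Continuous R) (hb : Continuous b) (hR0 : ∀ x ≤ S, 0 ≤ R x) (hb0 : ∀ x, 0 ≤ b x)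
    (hC : ∀ t ∈ Set.Icc 0 S, ∀ s ∈ Set.Icc 0 t, R (t - s) * b s ≤ C)
    (hv : ∀ t ∈ Set.Icc 0 S, 0 ≤ v t)
    (H : ∀ t ∈ Set.Icc 0 S, z t = v t + ∫ s in (0 : ℝ)..t, R (t - s) * (b s * z s)) :
    ∀ t ∈ Set.Icc 0 S, 0 ≤ z t := by
  have hm : Continuous (fun s => max (-z s) 0) := by fun_prop
  have key : ∀ t ∈ Set.Icc 0 S, max (-z t) 0 ≤ C * ∫ s in (0 : ℝ)..t, max (-z s) 0 := by
    intro t ht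
    have e1 : -(∫ s in (0 : ℝ)..t, R (t - s) * (b s * z s))
        ≤ ∫ s in (0 : ℝ)..t, C * max (-z s) 0 := by
      rw [← intervalIntegral.integral_neg]
      apply intervalIntegral.integral_mono_on ht.1
      · exact Continuous.intervalIntegrable (by fun_prop) _ _
      · exact Continuous.intervalIntegrable (by fun_prop) _ _
      · intro s hs
        have h1 := hC t ht s hs
        have h2 : 0 ≤ R (t - s) * b s := mul_nonneg (hR0 _ (by linarith [hs.1, ht.2])) (hb0 s)
        calc -(R (t - s) * (b s * z s)) = R (t - s) * b s * (-z s) := by ring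
          _ ≤ R (t - s) * b s * max (-z s) 0 := mul_le_mul_of_nonneg_left (le_max_left _ _) h2
          _ ≤ C * max (-z s) 0 := mul_le_mul_of_nonneg_right h1 (le_max_right _ _)
    have hC0 : 0 ≤ C := by
      have h1 := hC t ht 0 ⟨le_rfl, ht.1⟩
      have h2 : 0 ≤ R (t - 0) * b 0 := mul_nonneg (hR0 _ (by linarith [ht.2])) (hb0 _)
      linarith
    have e2 : 0 ≤ ∫ s in (0 : ℝ)..t, max (-z s) 0 :=
      intervalIntegral.integral_nonneg ht.1 (fun s _ => le_max_right _ _)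
    rw [intervalIntegral.integral_const_mul] at e1
    refine max_le ?_ (mul_nonneg hC0 e2)
    have := H t ht
    have := hv t ht
    linarith
  have hd : ∀ x, HasDerivAt (fun t => ∫ s in (0 : ℝ)..t, max (-z s) 0) (max (-z x) 0) x :=
    fun x => hm.integral_hasStrictDerivAt 0 x |>.hasDerivAt
  have hzero := eq_zero_of_abs_deriv_le_mul_abs_self_of_eq_zero_right
    (f := fun t => ∫ s in (0 : ℝ)..t, max (-z s) 0) (f' := fun x => max (-z x) 0)
    (K := C) (a := 0) (b := S)
    (fun x _ => (hd x).continuousAt.continuousWithinAt) (fun x _ => (hd x).hasDerivWithinAt)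
    (by simp) (by
      intro x hx
      have e2 : 0 ≤ ∫ s in (0 : ℝ)..x, max (-z s) 0 :=
        intervalIntegral.integral_nonneg hx.1 (fun s _ => le_max_right _ _)
      rw [Real.norm_eq_abs, Real.norm_eq_abs, abs_of_nonneg (le_max_right _ _), abs_of_nonneg e2]
      exact key x ⟨hx.1, hx.2.le⟩)
  intro t ht
  have h1 := key t ht
  have h2 := hzero t ht
  rw [h2, mul_zero] at h1
  have := le_max_left (-z t) 0
  linarith

/-- Upper separation bound in the linear case `f(t,y) = a(t) y`
(upper estimate of Theorem 2.9 of the paper). -/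
theorem linear_separation_upper_bound
    (α T Tstar L y₁₀ y₁₁ y₂₀ y₂₁ : ℝ) (hα₁ : 1 < α) (hα₂ : α < 2) (hT : 0 < T)
    (a astar : ℝ → ℝ)
    (ha_cont : ContinuousOn a (Set.Icc 0 T))
    (hL : IsGreatest ((fun t => |a t|) '' Set.Icc 0 T) L)
    (hastar : ∀ t ∈ Set.Icc (0 : ℝ) T, IsGreatest (a '' Set.Icc 0 t) (astar t))
    (y₁ y₂ : ℝ → ℝ)
    (hy₁cont : ContinuousOn y₁ (Set.Icc 0 T)) (hy₂cont : ContinuousOn y₂ (Set.Icc 0 T))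
    (hy₁ : ∀ t ∈ Set.Icc (0 : ℝ) T,
      y₁ t = y₁₀ + y₁₁ * t
        + (1 / Real.Gamma α) * ∫ s in (0 : ℝ)..t, (t - s) ^ (α - 1) * (a s * y₁ s))
    (hy₂ : ∀ t ∈ Set.Icc (0 : ℝ) T,
      y₂ t = y₂₀ + y₂₁ * t
        + (1 / Real.Gamma α) * ∫ s in (0 : ℝ)..t, (t - s) ^ (α - 1) * (a s * y₂ s))
    (h0 : y₁₀ ≤ y₂₀) (h1 : y₁₁ ≤ y₂₁)
    (hTstar : 0 < Tstar) (hTstarT : Tstar ≤ T)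
    (hcond : ∀ t ∈ Set.Icc (0 : ℝ) Tstar,
      mlE α α (-(L * t ^ α)) > 0 ∧
        ((y₂₀ - y₁₀) * mlE α 1 (-(L * t ^ α))
            + (y₂₁ - y₁₁) * t * mlE α 2 (-(L * t ^ α)) > 0
          ∨ (y₁₀ = y₂₀ ∧ y₁₁ < y₂₁ ∧ mlE α 2 (-(L * t ^ α)) > 0))) :
    ∀ t ∈ Set.Icc (0 : ℝ) Tstar,
      |y₂ t - y₁ t| ≤ |y₂₀ - y₁₀| * mlE α 1 (astar t * t ^ α)
        + |y₂₁ - y₁₁| * (t * mlE α 2 (astar t * t ^ α)) := by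
  classical
  have hΓ := Real.Gamma_pos_of_pos (show 0 < α by linarith)
  set cl : ℝ → ℝ := fun s => max 0 (min s T) with hcl
  have hclc : Continuous cl := by fun_prop
  have hclm : ∀ s, cl s ∈ Set.Icc 0 T := fun s =>
    ⟨le_max_left _ _, max_le hT.le (min_le_right _ _)⟩
  have hcle : ∀ s ∈ Set.Icc 0 T, cl s = s := by
    intro s hs
    simp only [hcl]
    rw [min_eq_left hs.2, max_eq_right hs.1]
  obtain ⟨b, hb⟩ : ∃ b : ℝ → ℝ, b = fun s => a (cl s) := ⟨_, rfl⟩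
  obtain ⟨z, hz⟩ : ∃ z : ℝ → ℝ, z = fun s => y₂ (cl s) - y₁ (cl s) := ⟨_, rfl⟩
  have hbc : Continuous b := by rw [hb]; exact ha_cont.comp_continuous hclc hclm
  have hzc : Continuous z := by
    rw [hz]
    exact (hy₂cont.comp_continuous hclc hclm).sub (hy₁cont.comp_continuous hclc hclm)
  have hbe : ∀ s ∈ Set.Icc 0 T, b s = a s := fun s hs => by rw [hb]; simp only; rw [hcle s hs]
  have hze : ∀ s ∈ Set.Icc 0 T, z s = y₂ s - y₁ s := fun s hs => by
    rw [hz]; simp only; rw [hcle s hs]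
  have hbL : ∀ s, |b s| ≤ L := fun s => by
    rw [hb]; exact hL.2 ⟨cl s, hclm s, rfl⟩
  have hkc := flK_cont hα₁.le
  -- integral equations in terms of `flJ`
  have aux : ∀ (y : ℝ → ℝ), ContinuousOn y (Set.Icc 0 T) → ∀ t ∈ Set.Icc (0 : ℝ) T,
      (1 / Real.Gamma α) * ∫ s in (0 : ℝ)..t, (t - s) ^ (α - 1) * (a s * y s)
        = flJ α (fun s => b s * y (cl s)) t := by
    intro y hy t ht
    rw [← intervalIntegral.integral_const_mul, flJ]
    apply intervalIntegral.integral_congr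
    intro s hs
    rw [Set.uIcc_of_le ht.1] at hs
    have hs' : s ∈ Set.Icc 0 T := ⟨hs.1, hs.2.trans ht.2⟩
    simp only
    rw [flK_pos_eq (by linarith [hs.2]), hbe s hs', hcle s hs']
    ring
  have H0 : ∀ t ∈ Set.Icc (0 : ℝ) T, z t = (y₂₀ - y₁₀) * flK 1 t + (y₂₁ - y₁₁) * flK 2 t
      + flJ α (fun s => b s * z s) t := by
    intro t ht
    have k1 : flK 1 t = 1 := by simp [flK]
    have k2 : flK 2 t = t := by
      rw [flK_pos_eq ht.1, Real.Gamma_two]; norm_num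
    have hc1 : Continuous (fun s => y₁ (cl s)) := hy₁cont.comp_continuous hclc hclm
    have hc2 : Continuous (fun s => y₂ (cl s)) := hy₂cont.comp_continuous hclc hclm
    have e : flJ α (fun s => b s * z s) t
        = flJ α (fun s => b s * y₂ (cl s)) t + (-1) * flJ α (fun s => b s * y₁ (cl s)) t := by
      rw [← flJ_smul, ← flJ_add (f := fun s => b s * y₂ (cl s))
        (h := fun s => -1 * (b s * y₁ (cl s))) hα₁.le (hbc.mul hc2)
        (continuous_const.mul (hbc.mul hc1)), hz]
      congr 1
      ext s
      ring
    rw [hze t ht, k1, k2, e, hy₁ t ht, hy₂ t ht, aux y₁ hy₁cont t ht, aux y₂ hy₂cont t ht]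
    ring
  have H1 : ∀ lam : ℝ, ∀ t ∈ Set.Icc (0 : ℝ) T, z t = (y₂₀ - y₁₀) * flK 1 t
      + (y₂₁ - y₁₁) * flK 2 t + flJ α (fun s => (b s - lam) * z s) t + lam * flJ α z t := by
    intro lam t ht
    rw [add_assoc, ← flJ_smul, ← flJ_add hα₁.le (by fun_prop) (by fun_prop), H0 t ht]
    congr 2
    ext s
    ring
  have z0 : z 0 = y₂₀ - y₁₀ := by
    have h := H0 0 ⟨le_rfl, hT.le⟩
    rw [flK_neg (p := 2) (by norm_num) le_rfl] at h
    rw [h]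
    simp [flK, flJ]
  have hRn : ∀ lam, -L ≤ lam → ∀ x ≤ Tstar, 0 ≤ flR α lam x := fun lam hl x hx =>
    flR_nonneg hα₁ hl (fun t ht => (hcond t ht).1) hx
  -- nonnegativity
  have hpos : ∀ t ∈ Set.Icc 0 Tstar, 0 ≤ z t := by
    have hRc : Continuous (flR α (-L)) := flR_cont hα₁
    obtain ⟨M, hM⟩ := (isCompact_Icc (a := (0 : ℝ)) (b := Tstar)).bddAbove_image
      hRc.continuousOn
    refine positivity_volterra (S := Tstar) (C := M * (2 * L)) (R := flR α (-L))
      (b := fun s => b s - -L)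
      (v := fun t => z t - ∫ s in (0 : ℝ)..t, flR α (-L) (t - s) * ((b s - -L) * z s))
      hzc hRc (by fun_prop) (hRn _ le_rfl) ?_ ?_ ?_ ?_
    · intro x
      have := abs_le.1 (hbL x)
      linarith
    · intro t ht s hs
      have h1 : flR α (-L) (t - s) ≤ M :=
        hM ⟨t - s, ⟨by linarith [hs.2], by linarith [hs.1, ht.2]⟩, rfl⟩
      have h2 := hRn (-L) le_rfl (t - s) (by linarith [hs.1, ht.2])
      have h3 := abs_le.1 (hbL s)
      exact mul_le_mul h1 (by linarith) (by linarith) (by linarith)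
    · intro t ht
      rcases ht.1.eq_or_lt with h | h
      · rw [← h, z0]
        simp only [intervalIntegral.integral_same]
        linarith
      · have hv := voc hα₁ hzc (g := fun s => (b s - -L) * z s) (by fun_prop) (H1 (-L)) h
          (ht.2.trans hTstarT)
        rw [hv]
        rw [show -L * t ^ α = -(L * t ^ α) by ring]
        rcases (hcond t ht).2 with h' | ⟨h1', h2', h3'⟩
        · linarith
        · rw [h1']
          have : 0 ≤ (y₂₁ - y₁₁) * (t * mlE α 2 (-(L * t ^ α))) :=
            mul_nonneg (by linarith) (mul_nonneg h.le h3'.le)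
          linarith
    · intro t ht
      ring
  intro t ht
  have htT : t ∈ Set.Icc 0 T := ⟨ht.1, ht.2.trans hTstarT⟩
  rw [← hze t htT, abs_of_nonneg (hpos t ht), abs_of_nonneg (sub_nonneg.2 h0),
    abs_of_nonneg (sub_nonneg.2 h1)]
  rcases ht.1.eq_or_lt with h | h
  · rw [← h, z0, Real.zero_rpow (by linarith)]
    have : mlE α 1 (astar 0 * 0) = 1 := by
      unfold mlE
      rw [tsum_eq_single 0]
      · simp
      · intro k hk
        simp [hk]
    rw [this]
    simp
  · obtain ⟨⟨τ, hτ, hτe⟩, hmax⟩ := hastar t htT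
    have hA : -L ≤ astar t := by
      rw [← hτe]
      exact (abs_le.1 (hL.2 ⟨τ, ⟨hτ.1, hτ.2.trans htT.2⟩, rfl⟩)).1
    have hv := voc hα₁ hzc (g := fun s => (b s - astar t) * z s) (by fun_prop) (H1 (astar t)) h
          (ht.2.trans hTstarT)
    rw [hv]
    have : 0 ≤ ∫ s in (0 : ℝ)..t, -(flR α (astar t) (t - s) * ((b s - astar t) * z s)) := by
      apply intervalIntegral.integral_nonneg ht.1
      intro s hs
      have h1 := hRn _ hA (t - s) (by linarith [hs.1, ht.2])
      have h2 := hpos s ⟨hs.1, hs.2.trans ht.2⟩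
      have h3 : b s ≤ astar t := by
        rw [hbe s ⟨hs.1, hs.2.trans htT.2⟩]
        exact hmax ⟨s, hs, rfl⟩
      have : 0 ≤ flR α (astar t) (t - s) * ((astar t - b s) * z s) :=
        mul_nonneg h1 (mul_nonneg (by linarith) h2)
      linarith
    rw [intervalIntegral.integral_neg] at this
    linarith
end
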